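/- For every nonnegative integer j and every real x, the absolute value of the j-th (physicists') Hermite polynomial satisfies |H_j(x)| < k·√(j!)·2^(j/2)·exp(x²/2), where k = 1.086435. -/

import Mathlib

open Real Filter MeasureTheory

/-- Physicists' Hermite polynomials via the standard recurrence
`H₀ = 1`, `H₁(x) = 2x`, `H_{n+2}(x) = 2x H_{n+1}(x) - 2(n+1) H_n(x)`. -/
noncomputable def physHermite : ℕ → ℝ → ℝ
  | 0, _ => 1
  | 1, x => 2 * x
  | n+2, x => 2 * x * physHermite (n+1) x - 2 * ((n : ℝ) + 1) * physHermite n x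

lemma physHermite_step (n : ℕ) (x : ℝ) :
    physHermite (n+2) x = 2 * x * physHermite (n+1) x - 2 * ((n : ℝ) + 1) * physHermite n x := by
  rw [physHermite]

lemma physHermite_neg (n : ℕ) (x : ℝ) :
    physHermite n (-x) = (-1)^n * physHermite n x ∧
    physHermite (n+1) (-x) = (-1)^(n+1) * physHermite (n+1) x := by
  induction n with
  | zero => simp [physHermite]
  | succ k ih =>
    refine ⟨ih.2, ?_⟩
    rw [physHermite_step, physHermite_step, ih.1, ih.2]
    ring

lemma physHermite_deriv (n : ℕ) (x : ℝ) :
    HasDerivAt (physHermite n) (2 * x * physHermite n x - physHermite (n+1) x) x ∧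
    HasDerivAt (physHermite (n+1)) (2 * ((n : ℝ) + 1) * physHermite n x) x := by
  induction n with
  | zero =>
    constructor
    · have : physHermite 0 = fun _ => (1:ℝ) := by funext y; rw [physHermite]
      rw [this]
      have h1 : physHermite (0+1) x = 2 * x := by rw [zero_add, physHermite]
      rw [h1]
      refine (hasDerivAt_const x (1:ℝ)).congr_deriv ?_
      ring
    · have : physHermite (0+1) = fun y => (2:ℝ) * y := by funext y; rw [zero_add, physHermite]
      rw [this]
      have h0 : physHermite 0 x = 1 := by rw [physHermite]
      rw [h0]
      refine ((hasDerivAt_id x).const_mul (2:ℝ)).congr_deriv ?_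
      simp
  | succ k ih =>
    obtain ⟨h0, h1⟩ := ih
    constructor
    · refine h1.congr_deriv ?_
      rw [physHermite_step]; ring
    · have : physHermite (k+1+1) = fun y => 2 * y * physHermite (k+1) y
          - 2 * ((k : ℝ) + 1) * physHermite k y := by
        funext y; exact physHermite_step k y
      rw [this]
      have h2 := (((hasDerivAt_id x).const_mul (2:ℝ)).mul h1).sub
        (h0.const_mul (2 * ((k : ℝ) + 1)))
      refine h2.congr_deriv ?_
      push_cast
      simp only [id]
      ring

noncomputable def hg (n : ℕ) (x : ℝ) : ℝ := physHermite n x * Real.exp (-(x^2/2))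
noncomputable def hh (n : ℕ) (x : ℝ) : ℝ :=
  (x * physHermite n x - physHermite (n+1) x) * Real.exp (-(x^2/2))

lemma exp_deriv (x : ℝ) : HasDerivAt (fun y : ℝ => Real.exp (-(y^2/2)))
    (-x * Real.exp (-(x^2/2))) x := by
  have h := ((((hasDerivAt_id x).pow 2).div_const 2).neg).exp
  refine h.congr_deriv ?_
  simp
  ring

lemma hg_deriv (n : ℕ) (x : ℝ) : HasDerivAt (hg n) (hh n x) x := by
  have h := (physHermite_deriv n x).1.mul (exp_deriv x)
  refine h.congr_deriv ?_
  unfold hh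
  ring

lemma hh_deriv (n : ℕ) (x : ℝ) :
    HasDerivAt (hh n) (-((2 * n + 1 - x^2) * hg n x)) x := by
  have h := (((hasDerivAt_id x).mul (physHermite_deriv n x).1).sub
    (physHermite_deriv n x).2).mul (exp_deriv x)
  refine h.congr_deriv ?_
  unfold hg
  simp
  ring

noncomputable def hph (n : ℕ) (x : ℝ) : ℝ := 2 * n + 1 - x^2
noncomputable def hV (n : ℕ) (x : ℝ) : ℝ := 2 * hph n x * hh n x - x * hg n x
noncomputable def hD (n : ℕ) (x : ℝ) : ℝ := 4 * hph n x ^ 3 + 2 * hph n x + 5 * x^2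
noncomputable def hQ (n : ℕ) (x : ℝ) : ℝ := hg n x ^ 2 + hV n x ^ 2 / hD n x

lemma hph_deriv (n : ℕ) (x : ℝ) : HasDerivAt (hph n) (-(2 * x)) x := by
  have h := ((hasDerivAt_id x).pow 2).const_sub (2 * (n:ℝ) + 1)
  refine h.congr_deriv ?_
  simp

lemma hV_deriv (n : ℕ) (x : ℝ) : HasDerivAt (hV n)
    (-5 * x * hh n x - (2 * hph n x ^ 2 + 1) * hg n x) x := by
  have h := (((hph_deriv n x).const_mul 2).mul (hh_deriv n x)).sub
    ((hasDerivAt_id x).mul (hg_deriv n x))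
  refine h.congr_deriv ?_
  simp only [id, hph]
  ring

lemma hD_deriv (n : ℕ) (x : ℝ) : HasDerivAt (hD n)
    (-(2 * x) * (12 * hph n x ^ 2 - 3)) x := by
  have h := ((((hph_deriv n x).pow 3).const_mul 4).add ((hph_deriv n x).const_mul 2)).add
    (((hasDerivAt_id x).pow 2).const_mul 5)
  refine h.congr_deriv ?_
  simp
  ring

lemma hF_deriv (n : ℕ) (x : ℝ) (hp : 1 ≤ hph n x) :
    HasDerivAt (fun y => hph n y * hQ n y ^ 2)
      (2 * hQ n x * (2 * x * hV n x ^ 2 / hD n x ^ 2 * (-9 * hph n x - 15 * x^2))) x := by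
  have hDp : 0 < hD n x := by unfold hD; positivity
  have hQd := ((hg_deriv n x).pow 2).add (((hV_deriv n x).pow 2).div (hD_deriv n x) hDp.ne')
  have h := (hph_deriv n x).mul (hQd.pow 2)
  refine h.congr_deriv ?_
  simp only [Pi.add_apply, Pi.div_apply, Pi.pow_apply]
  have e : hg n x ^ 2 + hV n x ^ 2 / hD n x = hQ n x := rfl
  rw [e]
  have key : -x * hQ n x + hph n x * (2 * hg n x * hh n x +
      (2 * hV n x * (-5 * x * hh n x - (2 * hph n x ^ 2 + 1) * hg n x) * hD n x
        - hV n x ^ 2 * (-(2 * x) * (12 * hph n x ^ 2 - 3))) / hD n x ^ 2)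
      = 2 * x * hV n x ^ 2 / hD n x ^ 2 * (-9 * hph n x - 15 * x^2) := by
    unfold hQ
    field_simp
    unfold hD hV
    ring
  rw [← key]
  push_cast
  ring

lemma hF_le (n : ℕ) (x : ℝ) (hx : 0 ≤ x) (hx2 : x^2 ≤ 2 * n) :
    hg n x ^ 4 ≤ (2 * n + 1) * hQ n 0 ^ 2 := by
  have hpy : ∀ y ∈ Set.Icc 0 x, 1 ≤ hph n y := by
    intro y hy
    unfold hph
    nlinarith [hy.1, hy.2]
  have hanti : AntitoneOn (fun y => hph n y * hQ n y ^ 2) (Set.Icc 0 x) := by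
    apply antitoneOn_of_hasDerivWithinAt_nonpos (convex_Icc 0 x)
      (f' := fun x => (2 * hQ n x * (2 * x * hV n x ^ 2 / hD n x ^ 2 * (-9 * hph n x - 15 * x^2))))
    · intro y hy
      exact (hF_deriv n y (hpy y hy)).continuousAt.continuousWithinAt
    · intro y hy
      exact (hF_deriv n y (hpy y (interior_subset hy))).hasDerivWithinAt
    · intro y hy
      have hy' := interior_subset hy
      have h1 := hpy y hy'
      have hy0 := hy'.1
      have hDp : 0 < hD n y := by unfold hD; positivity
      have hQp : 0 ≤ hQ n y := by unfold hQ; positivity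
      apply mul_nonpos_of_nonneg_of_nonpos (by positivity)
      apply mul_nonpos_of_nonneg_of_nonpos (by positivity)
      nlinarith [sq_nonneg y]
  have h := hanti (Set.left_mem_Icc.2 hx) (Set.right_mem_Icc.2 hx) hx
  have h1 := hpy x (Set.right_mem_Icc.2 hx)
  have hDp : 0 < hD n x := by unfold hD; positivity
  have hq : hg n x ^ 2 ≤ hQ n x := by
    unfold hQ
    have : 0 ≤ hV n x ^ 2 / hD n x := by positivity
    linarith
  have h0 : hph n 0 = 2 * n + 1 := by unfold hph; ring
  simp only [h0] at h
  have hq2 : hg n x ^ 4 ≤ hQ n x ^ 2 := by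
    calc hg n x ^ 4 = (hg n x ^ 2)^2 := by ring
      _ ≤ _ := by gcongr
  nlinarith [sq_nonneg (hQ n x)]

lemma herm_zero (n : ℕ) :
    (physHermite n 0 ^ 2) ^ 2 * (3 * n + 2) ≤ 2 * (2^n * (n.factorial : ℝ)) ^ 2 ∧
    (physHermite (n+1) 0 ^ 2) ^ 2 * (3 * (n + 1 : ℕ) + 2)
      ≤ 2 * (2^(n+1) * ((n+1).factorial : ℝ)) ^ 2 ∧
    (physHermite n 0 * physHermite (n+1) 0 = 0) := by
  induction n with
  | zero => simp [physHermite]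
  | succ k ih =>
    obtain ⟨h0, h1, h2⟩ := ih
    refine ⟨h1, ?_, ?_⟩
    · rw [physHermite_step]
      have e : ((k+1+1).factorial : ℝ) = (k+2) * ((k+1) * k.factorial) := by
        rw [Nat.factorial_succ, Nat.factorial_succ]; push_cast; ring
      rw [e]
      push_cast
      set A := (physHermite k 0 ^ 2)^2
      set B := (2^k * (k.factorial : ℝ))
      have hA : 0 ≤ A := by positivity
      have hk : (0:ℝ) ≤ k := by positivity
      have e1 : ((2 * 0 * physHermite (k+1) 0 - 2 * ((k:ℝ)+1) * physHermite k 0)^2)^2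
          * (3 * ((k:ℝ)+1+1)+2) = 16 * (k+1)^2 * (A * ((k+1)^2 * (3 * k + 8))) := by
        simp only [A]; ring
      have e2 : 2 * ((2:ℝ)^(k+1+1) * ((k+2) * ((k+1) * (k.factorial:ℝ))))^2
          = 16 * (k+1)^2 * ((k+2)^2 * (2 * B^2)) := by
        simp only [B]; ring
      rw [e1, e2]
      apply mul_le_mul_of_nonneg_left _ (by positivity)
      calc A * ((k+1)^2 * (3 * k + 8)) ≤ A * ((k+2)^2 * (3 * k + 2)) := by
            apply mul_le_mul_of_nonneg_left _ hA
            nlinarith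
        _ = (k+2)^2 * (A * (3 * k + 2)) := by ring
        _ ≤ _ := by apply mul_le_mul_of_nonneg_left h0 (by positivity)
    · rw [physHermite_step]
      linear_combination (-2 * ((k:ℝ)+1)) * h2

lemma hQ_zero (n : ℕ) :
    (2 * n + 1) * hQ n 0 ^ 2 ≤ 4 / 3 * (2^n * (n.factorial : ℝ)) ^ 2 := by
  obtain ⟨h0, h1, h2⟩ := herm_zero n
  have hn : (0:ℝ) ≤ n := by positivity
  have hph0 : hph n 0 = 2 * n + 1 := by unfold hph; ring
  have hQ0 : hQ n 0 ≤ physHermite n 0 ^ 2 + physHermite (n+1) 0 ^ 2 / (2 * n + 1) := by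
    unfold hQ hV hD hg hh
    rw [hph0]
    simp only [ne_eq, OfNat.ofNat_ne_zero, not_false_eq_true, zero_pow, zero_div, neg_zero,
      Real.exp_zero, mul_one, zero_mul, zero_sub, sub_zero, mul_zero, add_zero]
    refine add_le_add le_rfl ?_
    rw [div_le_div_iff₀ (by positivity) (by positivity)]
    have : 0 ≤ physHermite (n+1) 0 ^ 2 := sq_nonneg _
    have : 0 ≤ physHermite (n+1) 0 ^ 2 * (2 * (n:ℝ) + 1) := by positivity
    nlinarith
  have hQn : 0 ≤ hQ n 0 := by
    have : 0 < hD n 0 := by unfold hD; rw [hph0]; positivity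
    unfold hQ; positivity
  have hsq : hQ n 0 ^ 2 ≤ (physHermite n 0 ^ 2 + physHermite (n+1) 0 ^ 2 / (2 * n + 1))^2 := by
    gcongr
  refine (mul_le_mul_of_nonneg_left hsq (by positivity)).trans ?_
  set B := (2^n * (n.factorial : ℝ)) with hB
  rcases mul_eq_zero.1 h2 with h | h
  · have hn1 : (1:ℝ) ≤ n := by
      rcases Nat.eq_zero_or_pos n with h' | h'
      · subst h'; simp [physHermite] at h
      · exact_mod_cast h'
    have e : (2:ℝ)^(n+1) * ((n+1).factorial : ℝ) = 2 * (n+1) * B := by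
      rw [Nat.factorial_succ, hB]; push_cast; ring
    rw [e] at h1
    push_cast at h1
    rw [h]
    set A := (physHermite (n+1) 0 ^ 2)
    have e3 : (2 * (n:ℝ) + 1) * ((0:ℝ)^2 + A / (2 * n + 1))^2 = A^2 / (2 * n + 1) := by
      field_simp
      ring
    rw [e3, div_le_iff₀ (by positivity)]
    have hB2 : 0 ≤ B^2 := by positivity
    have h5 : (0:ℝ) < 3 * n + 5 := by positivity
    have : A^2 * (3 * n + 5) ≤ (4 / 3 * B^2 * (2 * n + 1)) * (3 * n + 5) := by
      have : 8 * ((n:ℝ)+1)^2 * B^2 ≤ (4/3 * (2 * n + 1) * (3 * n + 5)) * B^2 := by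
        apply mul_le_mul_of_nonneg_right _ hB2
        nlinarith
      nlinarith
    exact le_of_mul_le_mul_right this h5
  · rw [h]
    set A := (physHermite n 0 ^ 2)
    have hA : 0 ≤ A^2 := by positivity
    have : (2 * (n:ℝ) + 1) * (A + 0 ^ 2 / (2 * n + 1))^2 = (2 * n + 1) * A^2 := by simp
    rw [this]
    nlinarith

lemma herm_right (n : ℕ) (x : ℝ) (hx : 0 < x) (h : 2 * (n:ℝ) ≤ x^2) :
    0 < physHermite n x ∧ x * physHermite n x ≤ physHermite (n+1) x := by
  induction n with
  | zero => simp [physHermite]; linarith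
  | succ k ih =>
    push_cast at h
    obtain ⟨h0, h1⟩ := ih (by linarith)
    have hp : 0 < physHermite (k+1) x := lt_of_lt_of_le (by positivity) h1
    refine ⟨hp, ?_⟩
    rw [physHermite_step]
    have : 2 * ((k:ℝ)+1) * physHermite k x ≤ x^2 * physHermite k x :=
      mul_le_mul_of_nonneg_right h h0.le
    nlinarith

lemma hg_bound (n : ℕ) (x : ℝ) (hx : 0 ≤ x) :
    hg n x ^ 4 ≤ 4 / 3 * (2^n * (n.factorial : ℝ)) ^ 2 := by
  rcases le_total (x^2) (2 * n) with h | h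
  · exact (hF_le n x hx h).trans (hQ_zero n)
  · set a := Real.sqrt (2 * n) with ha
    have ha0 : 0 ≤ a := Real.sqrt_nonneg _
    have ha2 : a^2 = 2 * n := Real.sq_sqrt (by positivity)
    have hax : a ≤ x := Real.sqrt_le_iff.2 ⟨hx, h⟩
    have hanti : AntitoneOn (hg n) (Set.Ici a) := by
      apply antitoneOn_of_hasDerivWithinAt_nonpos (convex_Ici a) (f' := hh n)
      · intro y hy
        exact (hg_deriv n y).continuousAt.continuousWithinAt
      · intro y hy
        exact (hg_deriv n y).hasDerivWithinAt
      · intro y hy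
        rw [interior_Ici] at hy
        have hy' : a < y := hy
        have := (herm_right n y (by linarith) (by nlinarith)).2
        unfold hh
        exact mul_nonpos_of_nonpos_of_nonneg (by linarith) (Real.exp_pos _).le
    have h1 := hanti (Set.mem_Ici.2 le_rfl) (Set.mem_Ici.2 hax) hax
    have h2 := (hF_le n a ha0 ha2.le).trans (hQ_zero n)
    rcases hx.eq_or_lt with h3 | h3
    · have : a = x := by linarith
      rw [← this]; exact h2
    · have h4 : 0 ≤ hg n x := mul_nonneg (herm_right n x h3 h).1.le (Real.exp_pos _).le
      exact (pow_le_pow_left₀ h4 h1 4).trans h2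

theorem hermite_abs_bound (j : ℕ) (x : ℝ) :
    |physHermite j x| <
      1.086435 * Real.sqrt (Nat.factorial j) * (2:ℝ) ^ ((j : ℝ) / 2) * Real.exp (x^2 / 2) := by
  have habs : |physHermite j x| = |physHermite j (|x|)| := by
    rcases abs_cases x with h | h
    · rw [h.1]
    · rw [h.1, (physHermite_neg j x).1]; simp [abs_mul]
  have hb := hg_bound j |x| (abs_nonneg x)
  set C := Real.sqrt (Nat.factorial j) * (2:ℝ) ^ ((j : ℝ) / 2) with hC
  have hCp : 0 < C := by
    have : (0:ℝ) < Nat.factorial j := by exact_mod_cast Nat.factorial_pos j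
    positivity
  have hC2 : C^2 = 2^j * (j.factorial : ℝ) := by
    rw [hC, mul_pow, Real.sq_sqrt (by positivity), ← Real.rpow_natCast ((2:ℝ)^((j:ℝ)/2)),
      ← Real.rpow_mul (by norm_num)]
    have : (j:ℝ)/2 * (2:ℕ) = j := by push_cast; ring
    rw [this, Real.rpow_natCast, mul_comm]
  rw [← hC2] at hb
  have h4 : |hg j (abs x)| ^ 4 < (1.086435 * C)^4 := by
    have e : |hg j (abs x)| ^ 4 = hg j (abs x) ^ 4 := by
      rw [← abs_pow]; exact abs_of_nonneg (by positivity)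
    rw [e]
    have : 0 < C^4 := by positivity
    nlinarith
  have h5 : |hg j (abs x)| < 1.086435 * C := lt_of_pow_lt_pow_left₀ 4 (by positivity) h4
  unfold hg at h5
  rw [abs_mul, ← habs, Real.abs_exp, sq_abs, Real.exp_neg, ← div_eq_mul_inv,
    div_lt_iff₀ (Real.exp_pos _)] at h5
  rw [hC] at h5
  calc _ < _ := h5
    _ = _ := by ring
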